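/- Under the standing hypotheses, for every compact set Z ⊂ ℝ^n there is a constant C₁ = C₁(Z) < ∞ such that for all x, y ∈ Z there exist a Borel-measurable control A : [0,∞) → 𝔸, a time τ with 0 ≤ τ ≤ C₁ |x − y|, and a controlled trajectory γ started at x with γ(τ) = y. -/

import Mathlib

/-!
The target `y` is reached by infinitely many greedy steps with constant controls. The cone condition
says that at every state `q ≠ y` some control has a velocity with positive inner product with `y - q`;
on a compact set the progress is at least `c * ‖y - q‖` with velocities bounded by `M`
(`exists_uniform_descent`). Holding such a control for the time `η * ‖q - y‖`, with `η` small and fixed,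
multiplies the distance to `y` by at most `θ = 1 - c * η / 4 < 1`: this is the Euler-step computation
`step_estimate` together with the quadratic error bound `solution_estimate`.

Iterating, the distances decay geometrically, so the state converges to `y`; since each holding time
is at most `4 / c` times the distance gained in that step, the total time telescopes to at most
`4 / c * ‖x - y‖`. The pieces are concatenated, and continued after the accumulation time by any
constant control, in `isTraj_glue`. The control takes countably many values on intervals, hence is
Borel, and the integral equation survives at the accumulation time because velocities are bounded.
As the distance to `y` never increases from one switching time to the next, no chaining of local steps along the segment is needed.
-/

open MeasureTheory Set

noncomputable section

abbrev Euc (n : ℕ) := EuclideanSpace ℝ (Fin n)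

variable {n : ℕ} {𝔸 : Type*} [MetricSpace 𝔸] [MeasurableSpace 𝔸] [BorelSpace 𝔸]

/-- `γ` is the controlled trajectory driven by the control `A`,
starting at the point `q` at time `t₀`:  `γ s = q + ∫_{t₀}^s f (γ r) (A r) dr` for `s ≥ t₀`. -/
def IsTraj (f : Euc n → 𝔸 → Euc n) (A : ℝ → 𝔸) (t₀ : ℝ) (q : Euc n) (γ : ℝ → Euc n) : Prop :=
  ∀ s : ℝ, t₀ ≤ s → γ s = q + ∫ r in t₀..s, f (γ r) (A r)

/-- The set of achievable costs for transporting `x` to `y`. -/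
def costSet (f : Euc n → 𝔸 → Euc n) (K : ℝ → Euc n → 𝔸 → ℝ) (x y : Euc n) : Set ℝ :=
  {r | ∃ (τ : ℝ) (A : ℝ → 𝔸) (γ : ℝ → Euc n), 0 ≤ τ ∧ Measurable A ∧
    IsTraj f A 0 x γ ∧ γ τ = y ∧ r = ∫ t in (0:ℝ)..τ, K t (γ t) (A t)}

/-- The transport cost `c(x,y)`. -/
def cost (f : Euc n → 𝔸 → Euc n) (K : ℝ → Euc n → 𝔸 → ℝ) (x y : Euc n) : ℝ :=
  sInf (costSet f K x y)

/-- For each `q`, the convex cone generated by `{f q A : A ∈ 𝔸}` is all of `ℝⁿ`. -/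
def SpansCone (f : Euc n → 𝔸 → Euc n) : Prop :=
  ∀ (q v : Euc n), ∃ (k : ℕ) (c : Fin k → ℝ) (a : Fin k → 𝔸),
    (∀ i, 0 ≤ c i) ∧ ∑ i, c i • f q (a i) = v

/-- A bounded real-valued function. -/
def BddFun {α : Type*} (ψ : α → ℝ) : Prop := ∃ M : ℝ, ∀ q, |ψ q| ≤ M

/-- The set of achievable payoffs in the definition of the value function `J_ψ(t,q)`. -/
def valSet (f : Euc n → 𝔸 → Euc n) (K : ℝ → Euc n → 𝔸 → ℝ) (ψ : Euc n → ℝ)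
    (t : ℝ) (q : Euc n) : Set ℝ :=
  {r | ∃ (τ : ℝ) (A : ℝ → 𝔸) (γ : ℝ → Euc n), t ≤ τ ∧ Measurable A ∧
    IsTraj f A t q γ ∧ r = ψ (γ τ) - ∫ s in t..τ, K s (γ s) (A s)}

/-- The value function `J_ψ(t,q)`. -/
def Jval (f : Euc n → 𝔸 → Euc n) (K : ℝ → Euc n → 𝔸 → ℝ) (ψ : Euc n → ℝ)
    (t : ℝ) (q : Euc n) : ℝ :=
  sSup (valSet f K ψ t q)

/-- A measure with compact support. -/
def CompactlySupported {α : Type*} [TopologicalSpace α] [MeasurableSpace α]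
    (μ : Measure α) : Prop := ∃ Z : Set α, IsCompact Z ∧ μ Zᶜ = 0

/-- `π` is a transport plan from `μ` to `ν`. -/
def IsPlan (μ ν : Measure (Euc n)) (π : Measure (Euc n × Euc n)) : Prop :=
  IsProbabilityMeasure π ∧ π.map Prod.fst = μ ∧ π.map Prod.snd = ν

/-- The primal optimal transport value `V(μ,ν)`. -/
def Vval (f : Euc n → 𝔸 → Euc n) (K : ℝ → Euc n → 𝔸 → ℝ) (μ ν : Measure (Euc n)) : ℝ :=
  sInf {r | ∃ π : Measure (Euc n × Euc n), IsPlan μ ν π ∧ r = ∫ p, cost f K p.1 p.2 ∂π}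

/-- The Kantorovich dual value `D₁(μ,ν)`. -/
def D1val (f : Euc n → 𝔸 → Euc n) (K : ℝ → Euc n → 𝔸 → ℝ) (μ ν : Measure (Euc n)) : ℝ :=
  sSup {r | ∃ ψ φ : Euc n → ℝ, Continuous ψ ∧ Continuous φ ∧
    (∀ x y, ψ y - φ x ≤ cost f K x y) ∧ r = (∫ y, ψ y ∂ν) - ∫ x, φ x ∂μ}

/-- The Hamilton–Jacobi dual value `D(μ,ν)`. -/
def Dval (f : Euc n → 𝔸 → Euc n) (K : ℝ → Euc n → 𝔸 → ℝ) (μ ν : Measure (Euc n)) : ℝ :=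
  sSup {r | ∃ ψ : Euc n → ℝ, Continuous ψ ∧ BddFun ψ ∧
    r = (∫ y, ψ y ∂ν) - ∫ x, Jval f K ψ 0 x ∂μ}

/-- A `C¹` function, bounded with bounded first derivatives. -/
def BddC1 {E : Type*} [NormedAddCommGroup E] [NormedSpace ℝ E] (w : E → ℝ) : Prop :=
  ContDiff ℝ 1 w ∧ ∃ M : ℝ, ∀ p, |w p| ≤ M ∧ ‖fderiv ℝ w p‖ ≤ M

/-- `(ρ, σ)` is an admissible density process / stopping distribution pair for `(μ,ν)`. -/
def Admissible (f : Euc n → 𝔸 → Euc n) (μ ν : Measure (Euc n))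
    (ρ : ℝ → Measure (Euc n × 𝔸)) (σ : Measure (ℝ × Euc n)) : Prop :=
  (∀ t, IsFiniteMeasure (ρ t)) ∧ IsFiniteMeasure σ ∧
  σ {p : ℝ × Euc n | p.1 < 0} = 0 ∧
  (∀ g : Euc n × 𝔸 → ℝ, Continuous g → Measurable fun t => ∫ p, g p ∂(ρ t)) ∧
  (∀ w : ℝ × Euc n → ℝ, BddC1 w →
    ∫ p, w p ∂σ = (∫ x, w (0, x) ∂μ) +
      ∫ t in Ioi (0:ℝ), ∫ p : Euc n × 𝔸, fderiv ℝ w (t, p.1) (1, f p.1 p.2) ∂(ρ t)) ∧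
  (∀ u : Euc n → ℝ, Continuous u → BddFun u → (∫ y, u y ∂ν) = ∫ p : ℝ × Euc n, u p.2 ∂σ)

/-- The total running cost of a density process. -/
def EulerCost (K : ℝ → Euc n → 𝔸 → ℝ) (ρ : ℝ → Measure (Euc n × 𝔸)) : ℝ :=
  ∫ t in Ioi (0:ℝ), ∫ p : Euc n × 𝔸, K t p.1 p.2 ∂(ρ t)

/-- The Eulerian value `W(μ,ν)`. -/
def Wval (f : Euc n → 𝔸 → Euc n) (K : ℝ → Euc n → 𝔸 → ℝ) (μ ν : Measure (Euc n)) : ℝ :=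
  sInf {r | ∃ (ρ : ℝ → Measure (Euc n × 𝔸)) (σ : Measure (ℝ × Euc n)),
    Admissible f μ ν ρ σ ∧ r = EulerCost K ρ}

/-- `(ψ, J)` is a feasible pair for the Eulerian dual problem. -/
def DualFeasible (f : Euc n → 𝔸 → Euc n) (K : ℝ → Euc n → 𝔸 → ℝ)
    (ψ : Euc n → ℝ) (Jf : ℝ × Euc n → ℝ) : Prop :=
  Continuous ψ ∧ BddFun ψ ∧ BddC1 Jf ∧
  (∀ t q, 0 ≤ t → ψ q ≤ Jf (t, q)) ∧
  (∀ t q A, 0 ≤ t → fderiv ℝ Jf (t, q) (1, f q A) ≤ K t q A)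

/-- The Eulerian dual value `E(μ,ν)`. -/
def Eval (f : Euc n → 𝔸 → Euc n) (K : ℝ → Euc n → 𝔸 → ℝ) (μ ν : Measure (Euc n)) : ℝ :=
  sSup {r | ∃ (ψ : Euc n → ℝ) (Jf : ℝ × Euc n → ℝ), DualFeasible f K ψ Jf ∧
    r = (∫ y, ψ y ∂ν) - ∫ x, Jf (0, x) ∂μ}

open Filter Topology
open scoped BoundedContinuousFunction NNReal

/-! ### Autonomous Lipschitz differential equations -/

lemma integral_exp_le {k t : ℝ} (hk : 0 < k) :
    ∫ r in (0:ℝ)..t, Real.exp (k * r) ≤ Real.exp (k * t) / k := by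
  have : ∫ r in (0:ℝ)..t, Real.exp (k * r) = (Real.exp (k * t) - 1) / k := by
    rw [intervalIntegral.integral_comp_mul_left _ hk.ne', integral_exp]
    simp; ring
  rw [this]
  gcongr
  linarith

/-- Global forward existence for an autonomous Lipschitz field, in integral form. Banach's fixed point
theorem is applied to bounded continuous functions after discounting by `exp (-(L + 1) * t)`, which
makes the Picard operator a contraction on the whole half-line at once. -/
lemma exists_solution {E : Type*} [NormedAddCommGroup E] [NormedSpace ℝ E] [CompleteSpace E]
    {F : E → E} {L : ℝ≥0} (hF : LipschitzWith L F) (x : E) :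
    ∃ g : ℝ → E, Continuous g ∧ ∀ s, 0 ≤ s → g s = x + ∫ r in (0:ℝ)..s, F (g r) := by
  set k : ℝ := L + 1 with hk
  have hk0 : 0 < k := by positivity
  -- The discounted primitive of a function bounded by `C * exp (k * r)` is bounded by `C / k`; this
  -- gives both boundedness of the Picard operator and its contraction constant `L / k`.
  have key : ∀ (u : ℝ → E) (C : ℝ), (∀ r, 0 ≤ r → ‖u r‖ ≤ C * Real.exp (k * r)) → ∀ s, 0 ≤ s →
      ‖Real.exp (-(k * s)) • ∫ r in (0:ℝ)..s, u r‖ ≤ C / k := by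
    intro u C hu s hs
    have hC : 0 ≤ C := by simpa using (norm_nonneg _).trans (hu 0 le_rfl)
    rw [norm_smul, Real.norm_eq_abs, abs_of_pos (Real.exp_pos _), Real.exp_neg,
      inv_mul_le_iff₀ (Real.exp_pos _)]
    calc ‖∫ r in (0:ℝ)..s, u r‖ ≤ ∫ r in (0:ℝ)..s, C * Real.exp (k * r) := by
          apply intervalIntegral.norm_integral_le_of_norm_le hs
          · exact ae_of_all _ fun r hr => hu r hr.1.le
          · apply Continuous.intervalIntegrable; fun_prop
      _ ≤ C * (Real.exp (k * s) / k) := by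
          rw [intervalIntegral.integral_const_mul]
          gcongr
          exact integral_exp_le hk0
      _ = _ := by ring
  have hFb : ∀ q, ‖F q‖ ≤ ‖F 0‖ + L * ‖q‖ := by
    intro q
    have := hF.norm_sub_le q 0
    have h2 := norm_le_norm_add_norm_sub' (F q) (F 0)
    rw [sub_zero] at this
    linarith
  have hcF := hF.continuous
  have hcont : ∀ η : ℝ →ᵇ E, Continuous fun r => F (Real.exp (k * r) • η r) := by
    intro η; have := η.continuous; fun_prop
  have hpc : ∀ η : ℝ →ᵇ E, Continuous fun t =>
      ∫ r in (0:ℝ)..t, F (Real.exp (k * r) • η r) := fun η =>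
    intervalIntegral.continuous_primitive (fun a b => (hcont η).intervalIntegrable a b) 0
  -- The Picard operator for `g`, written for the discounted unknown `η t = exp (-(k * t)) • g t`;
  -- times are clipped to `max t 0`, so that `η` is bounded on the whole line.
  let P : (ℝ →ᵇ E) → (ℝ →ᵇ E) := fun η => BoundedContinuousFunction.ofNormedAddCommGroup
    (fun t => Real.exp (-(k * max t 0)) • x +
      Real.exp (-(k * max t 0)) • ∫ r in (0:ℝ)..(max t 0), F (Real.exp (k * r) • η r))
    (by have := (hpc η).comp (continuous_id.max continuous_const : Continuous fun t : ℝ => max t 0)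
        refine Continuous.add (by fun_prop) (Continuous.smul (by fun_prop) this))
    (‖x‖ + (‖F 0‖ + L * ‖η‖) / k)
    (by
      intro t
      have h0 : 0 ≤ max t 0 := le_max_right _ _
      refine (norm_add_le _ _).trans (add_le_add ?_ (key _ _ ?_ _ h0))
      · rw [norm_smul, Real.norm_eq_abs, abs_of_pos (Real.exp_pos _)]
        refine mul_le_of_le_one_left (norm_nonneg _) (Real.exp_le_one_iff.2 ?_)
        have := mul_nonneg hk0.le h0
        linarith
      · intro r hr
        refine (hFb _).trans ?_
        rw [norm_smul, Real.norm_eq_abs, abs_of_pos (Real.exp_pos _)]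
        have h1 : 1 ≤ Real.exp (k * r) := Real.one_le_exp (by positivity)
        have h2 := η.norm_coe_le_norm r
        have h3 : (0:ℝ) ≤ L := L.2
        have h4 : ‖F 0‖ * 1 ≤ ‖F 0‖ * Real.exp (k * r) := by gcongr
        have h5 : L * (Real.exp (k * r) * ‖η r‖) ≤ L * (Real.exp (k * r) * ‖η‖) := by gcongr
        linarith)
  have hP : ContractingWith (L / (L + 1)) P := by
    refine ⟨?_, LipschitzWith.of_dist_le_mul fun η ξ => ?_⟩
    · rw [div_lt_one (by positivity)]; exact lt_add_one L
    · refine (BoundedContinuousFunction.dist_le (by positivity)).2 fun t => ?_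
      have h0 : 0 ≤ max t 0 := le_max_right _ _
      have hd : P η t - P ξ t = Real.exp (-(k * max t 0)) • ∫ r in (0:ℝ)..(max t 0),
          (F (Real.exp (k * r) • η r) - F (Real.exp (k * r) • ξ r)) := by
        rw [intervalIntegral.integral_sub ((hcont η).intervalIntegrable _ _)
          ((hcont ξ).intervalIntegrable _ _), smul_sub]
        simp only [P, BoundedContinuousFunction.coe_ofNormedAddCommGroup]
        abel
      rw [dist_eq_norm, hd]
      refine (key _ (L * dist η ξ) ?_ _ h0).trans_eq ?_
      · intro r hr
        refine (hF.norm_sub_le _ _).trans ?_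
        rw [← smul_sub, norm_smul, Real.norm_eq_abs, abs_of_pos (Real.exp_pos _)]
        have h2 : ‖η r - ξ r‖ ≤ dist η ξ := by
          rw [← dist_eq_norm]; exact BoundedContinuousFunction.dist_coe_le_dist r
        have h3 : (0:ℝ) ≤ L := L.2
        have h5 : L * (Real.exp (k * r) * ‖η r - ξ r‖) ≤ L * (Real.exp (k * r) * dist η ξ) := by
          gcongr
        linarith
      · simp [hk]; ring
  have hfix : P (hP.fixedPoint P) = hP.fixedPoint P := hP.fixedPoint_isFixedPt
  set η := hP.fixedPoint P
  refine ⟨fun t => Real.exp (k * t) • η t, ?_, fun s hs => ?_⟩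
  · have := η.continuous; fun_prop
  · have h1 : η s = P η s := by rw [hfix]
    change Real.exp (k * s) • η s = _
    rw [h1]
    simp only [P, BoundedContinuousFunction.coe_ofNormedAddCommGroup, max_eq_left hs]
    rw [← smul_add, smul_smul, ← Real.exp_add]
    simp

/-- For times `t ≤ 1 / (2 * L)`, a solution started at `x` stays within `2 * t * ‖F x‖` of `x` and
agrees with the explicit Euler step up to an error quadratic in `t`. -/
lemma solution_estimate {E : Type*} [NormedAddCommGroup E] [NormedSpace ℝ E] [CompleteSpace E]
    {F : E → E} {L : ℝ≥0} (hF : LipschitzWith L F) {x : E} {g : ℝ → E} (hg : Continuous g)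
    (hgi : ∀ s, 0 ≤ s → g s = x + ∫ r in (0:ℝ)..s, F (g r)) {t : ℝ} (ht : 0 ≤ t)
    (hLt : L * t ≤ 1 / 2) :
    (∀ s ∈ Icc 0 t, ‖g s - x‖ ≤ 2 * t * ‖F x‖) ∧
      ‖g t - (x + t • F x)‖ ≤ 2 * L * ‖F x‖ * t ^ 2 := by
  have hL : (0:ℝ) ≤ L := L.2
  have hA : ∀ s ∈ Icc 0 t, ‖g s - x‖ ≤ 2 * t * ‖F x‖ := by
    -- The maximal deviation `D` satisfies `D ≤ t * (‖F x‖ + L * D)`, and `L * t ≤ 1 / 2` absorbs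
    -- the second term.
    obtain ⟨s₀, hs₀, hmax⟩ := isCompact_Icc.exists_isMaxOn (nonempty_Icc.2 ht)
      (f := fun s => ‖g s - x‖) (by fun_prop)
    have hB : ‖g s₀ - x‖ ≤ (‖F x‖ + L * ‖g s₀ - x‖) * |s₀ - 0| := by
      have : g s₀ - x = ∫ r in (0:ℝ)..s₀, F (g r) := by rw [hgi s₀ hs₀.1]; simp
      conv_lhs => rw [this]
      apply intervalIntegral.norm_integral_le_of_norm_le_const
      intro r hr
      rw [uIoc_of_le hs₀.1] at hr
      have h1 := hF.norm_sub_le (g r) x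
      have h2 : ‖F (g r)‖ ≤ ‖F x‖ + ‖F (g r) - F x‖ := by
        simpa using norm_add_le (F x) (F (g r) - F x)
      have h3 : ‖g r - x‖ ≤ ‖g s₀ - x‖ := hmax ⟨hr.1.le, hr.2.trans hs₀.2⟩
      have h4 := mul_le_mul_of_nonneg_left h3 hL
      linarith
    rw [sub_zero, abs_of_nonneg hs₀.1] at hB
    have hB2 : ‖g s₀ - x‖ ≤ (‖F x‖ + L * ‖g s₀ - x‖) * t :=
      hB.trans (by have := hs₀.2; gcongr)
    have : L * t * ‖g s₀ - x‖ ≤ 1 / 2 * ‖g s₀ - x‖ := by gcongr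
    intro s hs
    have h5 : ‖g s - x‖ ≤ ‖g s₀ - x‖ := hmax hs
    nlinarith
  refine ⟨hA, ?_⟩
  have hc : Continuous fun r => F (g r) := hF.continuous.comp hg
  have : g t - (x + t • F x) = ∫ r in (0:ℝ)..t, (F (g r) - F x) := by
    rw [intervalIntegral.integral_sub (hc.intervalIntegrable _ _) (by simp), hgi t ht]
    simp
  rw [this]
  refine (intervalIntegral.norm_integral_le_of_norm_le_const (C := L * (2 * t * ‖F x‖)) ?_).trans ?_
  · intro r hr
    rw [uIoc_of_le ht] at hr
    exact (hF.norm_sub_le _ _).trans (by gcongr; exact hA r ⟨hr.1.le, hr.2⟩)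
  · rw [sub_zero, abs_of_nonneg ht]
    apply le_of_eq; ring

/-! ### Greedy steps towards a target -/

/-- Over a compact set of states, every direction `w` is served by a control whose velocity is
bounded and makes progress `c * ‖w‖` along `w`, with constants uniform in the state and in `w`. At a
single state this holds because a unit vector which is a positive combination of velocities has a
positive inner product with one of them; continuity and compactness make it uniform. -/
lemma exists_uniform_descent {n : ℕ} {𝔸 : Type*} [MetricSpace 𝔸] (hn : 1 ≤ n)
    {f : Euc n → 𝔸 → Euc n} (hf : ∀ a, Continuous fun q => f q a) (hspan : SpansCone f)
    {K : Set (Euc n)} (hK : IsCompact K) :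
    ∃ c M : ℝ, 0 < c ∧ 0 ≤ M ∧ ∀ x ∈ K, ∀ w : Euc n, ∃ a,
      ‖f x a‖ ≤ M ∧ c * ‖w‖ ≤ inner ℝ (f x a) w := by
  have key : ∃ c M : ℝ, 0 < c ∧ 0 ≤ M ∧
      ∀ p ∈ K ×ˢ Metric.sphere (0 : Euc n) 1, ∃ a,
        ‖f p.1 a‖ ≤ M ∧ c ≤ inner ℝ (f p.1 a) p.2 := by
    refine (hK.prod (isCompact_sphere _ _)).induction_on
      (p := fun s => ∃ c M : ℝ, 0 < c ∧ 0 ≤ M ∧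
        ∀ p ∈ s, ∃ a, ‖f p.1 a‖ ≤ M ∧ c ≤ inner ℝ (f p.1 a) p.2) ?_ ?_ ?_ ?_
    · exact ⟨1, 0, one_pos, le_rfl, by simp⟩
    · rintro s t hst ⟨c, M, hc, hM, h⟩
      exact ⟨c, M, hc, hM, fun p hp => h p (hst hp)⟩
    · rintro s t ⟨c, M, hc, hM, h⟩ ⟨c', M', hc', hM', h'⟩
      refine ⟨min c c', max M M', lt_min hc hc', le_max_of_le_left hM, ?_⟩
      rintro p (hp | hp)
      · obtain ⟨a, h1, h2⟩ := h p hp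
        exact ⟨a, h1.trans (le_max_left _ _), (min_le_left _ _).trans h2⟩
      · obtain ⟨a, h1, h2⟩ := h' p hp
        exact ⟨a, h1.trans (le_max_right _ _), (min_le_right _ _).trans h2⟩
    · rintro ⟨x₀, v₀⟩ ⟨-, hv⟩
      obtain ⟨k, c, a, hc, hsum⟩ := hspan x₀ v₀
      have hv1 : ‖v₀‖ = 1 := by simpa using hv
      obtain ⟨i, hi⟩ : ∃ i, 0 < inner ℝ (f x₀ (a i)) v₀ := by
        by_contra! hcon
        have h1 : inner ℝ (∑ i, c i • f x₀ (a i)) v₀ = 1 := by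
          rw [hsum, real_inner_self_eq_norm_sq, hv1]; norm_num
        rw [sum_inner] at h1
        have h2 : ∑ i, inner ℝ (c i • f x₀ (a i)) v₀ ≤ 0 := Finset.sum_nonpos fun i _ => by
          rw [real_inner_smul_left]
          exact mul_nonpos_of_nonneg_of_nonpos (hc i) (hcon i)
        linarith
      set δ := inner ℝ (f x₀ (a i)) v₀ with hδ
      have hfi := hf (a i)
      have hn1 : ∀ᶠ p : Euc n × Euc n in 𝓝 (x₀, v₀), ‖f p.1 (a i)‖ < ‖f x₀ (a i)‖ + 1 := by
        have h : Continuous fun p : Euc n × Euc n => ‖f p.1 (a i)‖ := by fun_prop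
        exact (h.tendsto (x₀, v₀)).eventually_lt_const (lt_add_one _)
      have hn2 : ∀ᶠ p : Euc n × Euc n in 𝓝 (x₀, v₀), δ / 2 < inner ℝ (f p.1 (a i)) p.2 := by
        have h : Continuous fun p : Euc n × Euc n => inner ℝ (f p.1 (a i)) p.2 := by fun_prop
        exact (h.tendsto (x₀, v₀)).eventually_const_lt (half_lt_self hi)
      refine ⟨_, nhdsWithin_le_nhds (hn1.and hn2), δ / 2, ‖f x₀ (a i)‖ + 1, by linarith,
        by positivity, fun p hp => ⟨a i, hp.1.le, hp.2.le⟩⟩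
  obtain ⟨c, M, hc, hM, h⟩ := key
  refine ⟨c, M, hc, hM, fun x hx w => ?_⟩
  -- For `w = 0` any control with bounded velocity works; `1 ≤ n` supplies a unit vector.
  by_cases hw : w = 0
  · obtain ⟨a, ha, -⟩ := h (x, EuclideanSpace.single ⟨0, hn⟩ 1) ⟨hx, by simp⟩
    exact ⟨a, ha, by simp [hw]⟩
  · have hw' : ‖w‖ ≠ 0 := by simpa using hw
    obtain ⟨a, ha, ha2⟩ := h (x, ‖w‖⁻¹ • w) ⟨hx, by simp [norm_smul, hw']⟩
    refine ⟨a, ha, ?_⟩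
    dsimp only at ha2
    rw [real_inner_smul_right] at ha2
    rwa [inv_mul_eq_div, le_div_iff₀ (by positivity)] at ha2

/-- An Euler step of duration `η * ‖w‖` along a velocity `v` making progress `c` towards a target at
displacement `w` shrinks the remaining distance by the factor `1 - c * η / 2`, provided `η` is small. -/
lemma step_estimate {n : ℕ} {v w : Euc n} {c M η : ℝ}
    (hη : 0 < η) (hv : ‖v‖ ≤ M) (hvw : c * ‖w‖ ≤ inner ℝ v w) (h1 : η * M ^ 2 ≤ c)
    (h2 : η * c ≤ 1) :
    ‖(η * ‖w‖) • v - w‖ ≤ (1 - c * η / 2) * ‖w‖ := by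
  apply le_of_sq_le_sq _ (mul_nonneg (by nlinarith) (norm_nonneg _))
  rw [norm_sub_sq_real, norm_smul, real_inner_smul_left, Real.norm_eq_abs,
    abs_of_nonneg (by positivity)]
  have hw := norm_nonneg w
  have h3 : η * ‖w‖ * (c * ‖w‖) ≤ η * ‖w‖ * inner ℝ v w := by gcongr
  have h4 : (η * ‖w‖ * ‖v‖) ^ 2 ≤ η * ‖w‖ ^ 2 * (η * M ^ 2) := by
    have : (η * ‖w‖ * ‖v‖) ^ 2 ≤ (η * ‖w‖ * M) ^ 2 := by gcongr
    linarith
  have h5 : η * ‖w‖ ^ 2 * (η * M ^ 2) ≤ η * ‖w‖ ^ 2 * c := by gcongr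
  have h6 : 0 ≤ (c * η * ‖w‖) ^ 2 := sq_nonneg _
  nlinarith

/-! ### Concatenation along switching times -/

open Classical in
/-- Concatenation along a nondecreasing sequence of switching times: the value at `t` is `u m t` on
`[T m, T (m + 1))`, and `v t` once `t` is past all switching times. Empty intervals are allowed. All
times before `T 0` fall into the piece `u m` with the least `m` such that `t < T (m + 1)`; they play
no role. -/
def glue {β : Type*} (T : ℕ → ℝ) (u : ℕ → ℝ → β) (v : ℝ → β) (t : ℝ) : β :=
  if h : ∃ m, t < T (m + 1) then u (Nat.find h) t else v t

lemma glue_of_mem {β : Type*} {T : ℕ → ℝ} (hT : Monotone T) (u : ℕ → ℝ → β) (v : ℝ → β)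
    {m : ℕ} {t : ℝ} (h1 : T m ≤ t) (h2 : t < T (m + 1)) : glue T u v t = u m t := by
  classical
  have h : ∃ m, t < T (m + 1) := ⟨m, h2⟩
  have hm : Nat.find h = m := by
    rw [Nat.find_eq_iff]
    exact ⟨h2, fun k hk => not_lt.2 ((hT hk).trans h1)⟩
  rw [glue, dif_pos h]
  convert rfl
  exact hm.symm

lemma glue_of_forall_le {β : Type*} {T : ℕ → ℝ} (u : ℕ → ℝ → β) (v : ℝ → β)
    {t : ℝ} (h : ∀ m, T m ≤ t) : glue T u v t = v t := by
  rw [glue, dif_neg]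
  rintro ⟨m, hm⟩
  exact absurd hm (not_lt.2 (h _))

lemma exists_mem_Ico {T : ℕ → ℝ} {t : ℝ} (h0 : T 0 ≤ t) (h : ∃ m, t < T m) :
    ∃ m, T m ≤ t ∧ t < T (m + 1) := by
  classical
  have h1 := Nat.find_spec h
  obtain ⟨k, hk⟩ : ∃ k, Nat.find h = k + 1 := Nat.exists_eq_succ_of_ne_zero fun h2 => by
    rw [h2] at h1; linarith
  exact ⟨k, not_lt.1 (Nat.find_min h (m := k) (by omega)), hk ▸ h1⟩

lemma measurable_glue {β : Type*} [MeasurableSpace β] {T : ℕ → ℝ} {u : ℕ → ℝ → β} {v : ℝ → β}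
    (hu : ∀ m, Measurable (u m)) (hv : Measurable v) : Measurable (glue T u v) := by
  classical
  have hS : MeasurableSet {t : ℝ | ∃ m, t < T (m + 1)} := by
    rw [ofPred_exists]
    exact MeasurableSet.iUnion fun m => measurableSet_Iio
  have h1 : Measurable fun t : {t : ℝ | ∃ m, t < T (m + 1)} => u (Nat.find t.2) t.1 := by
    have : Measurable fun t : {t : ℝ | ∃ m, t < T (m + 1)} => Nat.find t.2 :=
      measurable_find (p := fun (t : {t : ℝ | ∃ m, t < T (m + 1)}) m => t.1 < T (m + 1))
        (fun t => t.2) fun m => measurable_subtype_coe measurableSet_Iio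
    have h2 : Measurable fun p : ℝ × ℕ => u p.2 p.1 := measurable_from_prod_countable_left hu
    exact h2.comp (measurable_subtype_coe.prodMk this)
  exact Measurable.dite h1 (hv.comp measurable_subtype_coe) hS

/-- Infinite concatenation of trajectories driven by constant controls: the `m`-th piece `g m` leads
from `X m` to `X (m + 1)` during `[T m, T (m + 1)]`, the nodes `X m` converge to `y` as `T m → S`,
and from time `S` on the trajectory `G` issued from `y` is followed. The velocity bound `B` makes the
velocity integrable up to the accumulation time `S`. -/
lemma isTraj_glue {n : ℕ} {𝔸 : Type*} {f : Euc n → 𝔸 → Euc n}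
    (hf : ∀ a, Continuous fun q => f q a) {T : ℕ → ℝ} {S : ℝ} (hT : Monotone T) (hT0 : T 0 = 0)
    (hTS : Tendsto T atTop (𝓝 S)) {g : ℕ → ℝ → Euc n} {a : ℕ → 𝔸} {X : ℕ → Euc n}
    (hg : ∀ m, Continuous (g m))
    (hgi : ∀ m s, 0 ≤ s → g m s = X m + ∫ r in (0:ℝ)..s, f (g m r) (a m))
    (hX : ∀ m, g m (T (m + 1) - T m) = X (m + 1)) {y : Euc n} (hXy : Tendsto X atTop (𝓝 y))
    {B : ℝ} (hB : ∀ m, ∀ s ∈ Icc 0 (T (m + 1) - T m), ‖f (g m s) (a m)‖ ≤ B)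
    {G : ℝ → Euc n} {b : 𝔸} (hG : Continuous G)
    (hGi : ∀ s, 0 ≤ s → G s = y + ∫ r in (0:ℝ)..s, f (G r) b) :
    IsTraj f (glue T (fun m _ => a m) (fun _ => b)) 0 (X 0)
      (glue T (fun m t => g m (t - T m)) (fun t => G (t - S))) := by
  set γ := glue T (fun m t => g m (t - T m)) (fun t => G (t - S)) with hγ
  set A := glue T (fun m _ => a m) (fun _ => b) with hA
  set H : ℝ → Euc n := fun t => f (γ t) (A t) with hH
  have hTle : ∀ m, T m ≤ S := hT.ge_of_tendsto hTS
  have hS0 : 0 ≤ S := hT0 ▸ hTle 0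
  have hTnn : ∀ m, 0 ≤ T m := fun m => hT0 ▸ hT (Nat.zero_le m)
  have hex : ∀ t, 0 ≤ t → t < S → ∃ m, T m ≤ t ∧ t < T (m + 1) := fun t h0 h1 =>
    exists_mem_Ico (hT0.trans_le h0) (hTS.eventually_const_lt h1).exists
  have hγm : ∀ {m t}, T m ≤ t → t < T (m + 1) → γ t = g m (t - T m) := fun h1 h2 =>
    glue_of_mem hT _ _ h1 h2
  have hHm : ∀ {m t}, T m ≤ t → t < T (m + 1) → H t = f (g m (t - T m)) (a m) := fun h1 h2 => by
    simp only [hH, hγm h1 h2]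
    rw [hA, glue_of_mem hT _ _ h1 h2]
  have hγS : ∀ {t}, S ≤ t → γ t = G (t - S) := fun h =>
    glue_of_forall_le _ _ fun m => (hTle m).trans h
  have hHS : ∀ {t}, S ≤ t → H t = f (G (t - S)) b := fun h => by
    simp only [hH, hγS h]
    rw [hA, glue_of_forall_le _ _ fun m => (hTle m).trans h]
  have hHglue : H = glue T (fun m t => f (g m (t - T m)) (a m)) (fun t => f (G (t - S)) b) := by
    funext t
    simp only [hH, hγ, hA, glue]
    split_ifs <;> rfl
  have hHmeas : Measurable H := by
    rw [hHglue]
    refine measurable_glue (fun m => ?_) ?_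
    · have := hg m; have := hf (a m)
      exact Continuous.measurable (by fun_prop)
    · have := hf b
      exact Continuous.measurable (by fun_prop)
  have hint1 : IntervalIntegrable H volume 0 S := by
    rw [intervalIntegrable_iff_integrableOn_Ico_of_le hS0]
    refine Measure.integrableOn_of_bounded (M := B) (by simp) hHmeas.aestronglyMeasurable ?_
    refine (ae_restrict_iff' measurableSet_Ico).2 (ae_of_all _ fun t ht => ?_)
    obtain ⟨m, h1, h2⟩ := hex t ht.1 ht.2
    rw [hHm h1 h2]
    exact hB m _ ⟨by linarith, by linarith⟩
  have hpiece : ∀ m s, T m ≤ s → s ≤ T (m + 1) → ∫ r in (T m)..s, H r = g m (s - T m) - X m := by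
    intro m s h1 h2
    rw [hgi m _ (sub_nonneg.2 h1), add_sub_cancel_left, ← sub_self (T m),
      ← intervalIntegral.integral_comp_sub_right (fun r => f (g m r) (a m)) (T m)]
    refine intervalIntegral.integral_congr_uIoo fun r hr => ?_
    rw [uIoo_of_le h1] at hr
    exact hHm hr.1.le (hr.2.trans_le h2)
  have hsub : ∀ {s t}, 0 ≤ s → s ≤ S → 0 ≤ t → t ≤ S → IntervalIntegrable H volume s t := by
    intro s t h1 h2 h3 h4
    refine hint1.mono_set ?_
    rw [uIcc_of_le hS0]
    exact uIcc_subset_Icc ⟨h1, h2⟩ ⟨h3, h4⟩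
  have hnode : ∀ m, X 0 + ∫ r in (0:ℝ)..(T m), H r = X m := by
    intro m
    induction m with
    | zero => simp [hT0]
    | succ m ih =>
      rw [← intervalIntegral.integral_add_adjacent_intervals
        (hsub le_rfl hS0 (hTnn m) (hTle m)) (hsub (hTnn m) (hTle m) (hTnn _) (hTle _)),
        ← add_assoc, ih, hpiece m _ (hT (Nat.le_succ m)) le_rfl, hX]
      abel
  -- The integral equation at the nodes `T m` passes to the limit `S` by continuity of the primitive.
  have hlim : X 0 + ∫ r in (0:ℝ)..S, H r = y := by
    refine tendsto_nhds_unique (f := X) (l := atTop) ?_ hXy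
    have hc := intervalIntegral.continuousOn_primitive_interval' hint1 left_mem_uIcc
    rw [uIcc_of_le hS0] at hc
    have h1 := (hc S ⟨hS0, le_rfl⟩).tendsto.comp
      (tendsto_nhdsWithin_iff.2 ⟨hTS, .of_forall fun m => ⟨hTnn m, hTle m⟩⟩)
    refine (h1.const_add (X 0)).congr fun m => hnode m
  intro s hs
  change γ s = X 0 + ∫ r in (0:ℝ)..s, H r
  rcases lt_or_ge s S with h | h
  · obtain ⟨m, h1, h2⟩ := hex s hs h
    rw [← intervalIntegral.integral_add_adjacent_intervals
        (hsub le_rfl hS0 (hTnn m) (hTle m)) (hsub (hTnn m) (hTle m) hs h.le),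
        ← add_assoc, hnode, hpiece m s h1 h2.le, hγm h1 h2]
    abel
  · have hEq : EqOn (fun r => f (G (r - S)) b) H (uIoc S s) := fun r hr => by
      rw [uIoc_of_le h] at hr
      exact (hHS hr.1.le).symm
    have hcG : Continuous fun r => f (G (r - S)) b := by
      have := hf b; fun_prop
    have hint2 : IntervalIntegrable H volume S s := (hcG.intervalIntegrable S s).congr hEq
    rw [← intervalIntegral.integral_add_adjacent_intervals hint1 hint2, ← add_assoc, hlim,
      hγS h, hGi _ (sub_nonneg.2 h), ← sub_self S,
      ← intervalIntegral.integral_comp_sub_right (fun r => f (G r) b) S]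
    congr 1
    exact intervalIntegral.integral_congr_ae (ae_of_all _ fun r hr => hEq hr)

/-! ### Controllability -/

theorem controllability_on_compacts
    {n : ℕ} {𝔸 : Type*} [MetricSpace 𝔸] [CompleteSpace 𝔸]
    [TopologicalSpace.SeparableSpace 𝔸] [MeasurableSpace 𝔸] [BorelSpace 𝔸]
    (hn : 1 ≤ n) (f : Euc n → 𝔸 → Euc n)
    (hfLip : ∃ L : NNReal, ∀ A, LipschitzWith L fun q => f q A)
    (hfC : ∀ q, Continuous (f q))
    (hspan : SpansCone f) :
    ∀ Z : Set (Euc n), IsCompact Z → ∃ C₁ : ℝ, 0 ≤ C₁ ∧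
      ∀ x ∈ Z, ∀ y ∈ Z, ∃ (A : ℝ → 𝔸) (γ : ℝ → Euc n) (τ : ℝ),
        Measurable A ∧ 0 ≤ τ ∧ τ ≤ C₁ * ‖x - y‖ ∧ IsTraj f A 0 x γ ∧ γ τ = y := by
  intro Z hZ
  obtain ⟨L, hL⟩ := hfLip
  have hL0 : (0:ℝ) ≤ L := L.2
  obtain ⟨R, hR0, hR⟩ : ∃ R : ℝ, 0 < R ∧ Z ⊆ Metric.closedBall 0 R := by
    obtain ⟨R, hR⟩ := hZ.isBounded.subset_closedBall 0
    exact ⟨max R 1, by positivity, hR.trans (Metric.closedBall_subset_closedBall (le_max_left _ _))⟩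
  obtain ⟨c, M, hc, hM, hdesc⟩ := exists_uniform_descent hn (fun a => (hL a).continuous) hspan
    (isCompact_closedBall (0 : Euc n) (3 * R))
  -- States within `2 * R` of a target in `closedBall 0 R` lie in `closedBall 0 (3 * R)`.
  -- Each condition below has the form `η * p ≤ q` with `q > 0`, so it holds for small `η`.
  obtain ⟨η, hη, hη1, hη2, hη3, hη4⟩ : ∃ η : ℝ, 0 < η ∧ η * M ^ 2 ≤ c ∧ η * c ≤ 1 ∧
      L * (η * (2 * R)) ≤ 1 / 2 ∧ 2 * L * M * η * (2 * R) ≤ c / 4 := by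
    have hev : ∀ (p q : ℝ), 0 < q → ∀ᶠ η : ℝ in 𝓝[>] 0, η * p ≤ q := by
      intro p q hq
      have h : Tendsto (fun η : ℝ => η * p) (𝓝[>] 0) (𝓝 (0 * p)) :=
        ((continuous_mul_const p).tendsto 0).mono_left nhdsWithin_le_nhds
      exact (h.eventually_lt_const (by simpa using hq)).mono fun _ h => h.le
    obtain ⟨η, h1, h2, h3, h4, h5⟩ := ((hev (M ^ 2) c hc).and ((hev c 1 one_pos).and
      ((hev (L * (2 * R)) (1 / 2) (by norm_num)).and
      ((hev (2 * L * M * (2 * R)) (c / 4) (by positivity)).and self_mem_nhdsWithin)))).exists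
    exact ⟨η, h5, h1, h2, by linarith, by linarith⟩
  refine ⟨4 / c, by positivity, fun x hx y hy => ?_⟩
  have hxR : ‖x‖ ≤ R := by simpa using hR hx
  have hyR : ‖y‖ ≤ R := by simpa using hR hy
  have hd0 : ‖x - y‖ ≤ 2 * R := (norm_sub_le _ _).trans (by linarith)
  -- A single constant control, held for time `η * ‖q - y‖`, shrinks the distance to `y` by a fixed
  -- factor: the Euler step gains `c * η / 2`, and the Euler error costs at most half of that.
  have hstep : ∀ q : Euc n, ‖q - y‖ ≤ 2 * R → ∃ (a : 𝔸) (g : ℝ → Euc n), Continuous g ∧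
      (∀ s, 0 ≤ s → g s = q + ∫ r in (0:ℝ)..s, f (g r) a) ∧
      (∀ s ∈ Icc 0 (η * ‖q - y‖), ‖f (g s) a‖ ≤ 2 * M) ∧
      ‖g (η * ‖q - y‖) - y‖ ≤ (1 - c * η / 4) * ‖q - y‖ := by
    intro q hq
    have hqK : q ∈ Metric.closedBall (0 : Euc n) (3 * R) := by
      have := norm_le_norm_add_norm_sub' q y
      rw [mem_closedBall_zero_iff]
      linarith
    obtain ⟨a, haM, ha⟩ := hdesc q hqK (y - q)
    obtain ⟨g, hg, hgi⟩ := exists_solution (hL a) q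
    rw [norm_sub_rev y q] at ha
    set d := ‖q - y‖ with hd
    have hdnn : 0 ≤ d := norm_nonneg _
    have hLt : L * (η * d) ≤ 1 / 2 := le_trans (by gcongr) hη3
    obtain ⟨he1, he2⟩ := solution_estimate (hL a) hg hgi (t := η * d) (by positivity) hLt
    refine ⟨a, g, hg, hgi, fun s hs => ?_, ?_⟩
    · have h1 := (hL a).norm_sub_le (g s) q
      have h2 : ‖f (g s) a‖ ≤ ‖f q a‖ + ‖f (g s) a - f q a‖ := by
        simpa using norm_add_le (f q a) (f (g s) a - f q a)
      have h3 : L * ‖g s - q‖ ≤ L * (2 * (η * d) * ‖f q a‖) := by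
        gcongr; exact he1 s hs
      have h4 : L * (η * d) * ‖f q a‖ ≤ 1 / 2 * ‖f q a‖ := by gcongr
      linarith
    · have hs := step_estimate (v := f q a) (w := y - q) hη haM
        (by rw [norm_sub_rev y q]; exact ha) hη1 hη2
      rw [norm_sub_rev y q, ← hd] at hs
      have h1 : g (η * d) - y = (g (η * d) - (q + (η * d) • f q a)) +
          ((η * d) • f q a - (y - q)) := by abel
      have h2 : 2 * L * ‖f q a‖ * (η * d) ^ 2 ≤ c / 4 * (η * d) := by
        calc 2 * L * ‖f q a‖ * (η * d) ^ 2 = 2 * L * ‖f q a‖ * η * d * (η * d) := by ring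
          _ ≤ 2 * L * M * η * (2 * R) * (η * d) := by gcongr
          _ ≤ _ := by gcongr
      rw [h1]
      refine (norm_add_le _ _).trans ((add_le_add he2 hs).trans ?_)
      linarith
  have hne : Nonempty 𝔸 := ⟨(hstep x hd0).choose⟩
  choose! α φ hφc hφi hφB hφd using hstep
  let X : ℕ → Euc n := fun m => Nat.rec x (fun _ q => φ q (η * ‖q - y‖)) m
  have hXs : ∀ m, X (m + 1) = φ (X m) (η * ‖X m - y‖) := fun m => rfl
  have hθ0 : 0 ≤ 1 - c * η / 4 := by linarith
  have hθ1 : 1 - c * η / 4 < 1 := by have := mul_pos hc hη; linarith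
  have hXR : ∀ m, ‖X m - y‖ ≤ 2 * R := by
    intro m
    induction m with
    | zero => exact hd0
    | succ m ih =>
      exact (hφd _ ih).trans ((mul_le_of_le_one_left (norm_nonneg _) hθ1.le).trans ih)
  have hXd : ∀ m, ‖X (m + 1) - y‖ ≤ (1 - c * η / 4) * ‖X m - y‖ := fun m => hφd _ (hXR m)
  have hXpow : ∀ m, ‖X m - y‖ ≤ (1 - c * η / 4) ^ m * ‖x - y‖ := by
    intro m
    induction m with
    | zero => simp [X]
    | succ m ih =>
      refine (hXd m).trans ?_
      rw [pow_succ', mul_assoc]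
      gcongr
  have hXy : Tendsto X atTop (𝓝 y) := by
    rw [tendsto_iff_norm_sub_tendsto_zero]
    refine squeeze_zero (fun _ => norm_nonneg _) hXpow ?_
    simpa using (tendsto_pow_atTop_nhds_zero_of_lt_one hθ0 hθ1).mul_const ‖x - y‖
  let T : ℕ → ℝ := fun m => ∑ k ∈ Finset.range m, η * ‖X k - y‖
  have hTs : ∀ m, T (m + 1) - T m = η * ‖X m - y‖ := fun m => by
    simp [T, Finset.sum_range_succ]
  have hTmono : Monotone T := monotone_nat_of_le_succ fun m => by
    have : 0 ≤ η * ‖X m - y‖ := by positivity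
    linarith [hTs m]
  -- Each holding time is at most `4 / c` times the distance gained, so the times telescope.
  have hTb : ∀ m, T m ≤ 4 / c * (‖x - y‖ - ‖X m - y‖) := by
    intro m
    induction m with
    | zero => simp [T, X]
    | succ m ih =>
      have h1 : η * ‖X m - y‖ ≤ 4 / c * (‖X m - y‖ - ‖X (m + 1) - y‖) := by
        have := hXd m
        rw [div_mul_eq_mul_div, le_div_iff₀ hc]
        linarith
      linarith [hTs m]
  have hTb' : ∀ m, T m ≤ 4 / c * ‖x - y‖ := fun m => (hTb m).trans (by gcongr; simp)
  have hTS := tendsto_atTop_ciSup hTmono ⟨_, forall_mem_range.2 hTb'⟩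
  set S := ⨆ m, T m
  have hT0 : T 0 = 0 := by simp [T]
  obtain ⟨b⟩ := hne
  obtain ⟨G, hG, hGi⟩ := exists_solution (hL b) y
  refine ⟨_, _, S, ?_, hT0 ▸ hTmono.ge_of_tendsto hTS 0, le_of_tendsto' hTS hTb',
    isTraj_glue (fun a => (hL a).continuous) hTmono hT0 hTS (fun m => hφc _ (hXR m))
      (fun m => hφi _ (hXR m)) (fun m => by rw [hTs, hXs]) hXy
      (fun m s hs => hφB _ (hXR m) s (by rwa [hTs] at hs)) hG hGi, ?_⟩
  · exact measurable_glue (fun m => measurable_const) measurable_const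
  · rw [glue_of_forall_le _ _ (hTmono.ge_of_tendsto hTS), sub_self, hGi 0 le_rfl]
    simp
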